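/- Let p_1 < p_2 < ... denote the sequence of all primes and for n ≥ 1 set 𝒮(n) = ∑_{d | n} d·φ(d). Then the limit as N → ∞ of (1/N) · ∑_{i=1}^N 𝒮(p_i − 1)/(p_i − 1)² exists and equals Stephens' constant S = ∏_p (1 − p/(p³ − 1)). -/

import Mathlib

open Filter

/-- `𝒮(n) = ∑_{d | n} d·φ(d)`. -/
def stephensSum (n : ℕ) : ℕ := ∑ d ∈ n.divisors, d * d.totient

/-- Stephens' constant `S = ∏_p (1 - p/(p³ - 1))`, product over all primes. -/
noncomputable def stephensConstant : ℝ :=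
  ∏' p : Nat.Primes, (1 - ((p : ℕ) : ℝ) / (((p : ℕ) : ℝ) ^ 3 - 1))

/-!
Write `𝒮(n) / n² = ∑_{d ∣ n} g(d)` with `g(d) = d⁻² ∏_{p ∣ d} (1 - p)`. Weighting the primes by
`log p` and exchanging the sums, the mean of `𝒮(p - 1) / (p - 1)²` over `p ≤ n` becomes
`∑_d g(d) θ(n; d, 1) / n`. By the prime number theorem in arithmetic progressions the `d`-th term
tends to `g(d) / φ(d)`, and the Chebyshev bound `θ(n; d, 1) ≪ n (1 + log d) / d`, uniform in `d`,
dominates the series because `|g(d)| ≤ 1 / d`. The limit `∑_d g(d) / φ(d)` is the Euler product of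
Stephens' constant. The weights are removed by `π(n) log n ~ θ(n)`.

The prime number theorem in arithmetic progressions follows from the Wiener–Ikehara theorem, as the
L-series of `Λ` on a residue class minus its pole extends continuously to the line `Re s = 1`:
there the means of the summatory function against dilates of a nonnegative kernel with compactly
supported Fourier transform converge by the Riemann–Lebesgue lemma, and monotonicity of the
summatory function turns this into pointwise convergence. The Chebyshev bound comes from the
divisibility `N! ∣ q ^ N ∏_{i < N} (a + q i)`.
-/

open MeasureTheory Topology
open scoped FourierTransform ComplexConjugate SchwartzMap Real

lemma conj_fourier_of_even_of_real {f : ℝ → ℝ} (hf : ∀ t, f (-t) = f t) (w : ℝ) :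
    conj (𝓕 (fun t => (f t : ℂ)) w) = 𝓕 (fun t => (f t : ℂ)) w := by
  rw [Real.fourier_real_eq_integral_exp_smul, ← integral_conj, ← integral_neg_eq_self]
  refine integral_congr_ae (.of_forall fun t => ?_)
  simp [hf, ← Complex.exp_conj, map_ofNat]

-- For an even real bump function `f`, the transform of `f ⋆ f` is the square of a real function.
lemma exists_fourier_eq_ofReal_nonneg :
    ∃ k : ℝ → ℂ, ∃ K : ℝ → ℝ, Continuous k ∧ HasCompactSupport k ∧ (∀ w, 𝓕 k w = K w) ∧
      0 ≤ K ∧ Integrable K ∧ 0 < ∫ w, K w := by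
  let ψ : ContDiffBump (0 : ℝ) := ⟨1, 2, one_pos, one_lt_two⟩
  let f : ℝ → ℂ := fun t => (ψ t : ℂ)
  have hf_supp : HasCompactSupport f := ψ.hasCompactSupport.comp_left Complex.ofReal_zero
  let s : 𝓢(ℝ, ℂ) := hf_supp.toSchwartzMap (Complex.ofRealCLM.contDiff.comp ψ.contDiff)
  have hf_cont : Continuous f := Complex.continuous_ofReal.comp ψ.continuous
  have hf_int : Integrable f := hf_cont.integrable_of_hasCompactSupport hf_supp
  have hs (w : ℝ) : (𝓕 s : 𝓢(ℝ, ℂ)) w = 𝓕 f w := congrFun (SchwartzMap.fourier_coe s) w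
  let K : ℝ → ℝ := fun w => ‖𝓕 s w‖ ^ 2
  have hK_int : Integrable K := ((𝓕 s).memLp 2).norm.integrable_sq
  have hK_cont : Continuous K := (𝓕 s).continuous.norm.pow 2
  have hK_zero : K 0 ≠ 0 := by
    have : 𝓕 f 0 = ((∫ t, ψ t : ℝ) : ℂ) := by
      simp [Real.fourier_real_eq_integral_exp_smul, f, integral_complex_ofReal]
    simpa [K, hs, this] using (ψ.integral_pos (μ := volume)).ne'
  refine ⟨convolution f f (ContinuousLinearMap.mul ℂ ℂ), K,
    hf_supp.continuous_convolution_left _ hf_cont hf_int.locallyIntegrable,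
    hf_supp.convolution _ hf_supp, fun w => ?_, fun w => by positivity, hK_int,
    integral_pos_of_integrable_nonneg_nonzero hK_cont hK_int (fun w => by positivity) hK_zero⟩
  rw [Real.fourier_mul_convolution_eq hf_int hf_int]
  nth_rw 2 [← conj_fourier_of_even_of_real ψ.neg]
  rw [Complex.mul_conj']
  simp [K, hs, f]

lemma integral_mul_fourier_sub {F k : ℝ → ℂ} (hF : Integrable F) (hk : Integrable k) (x : ℝ) :
    ∫ u, F u * 𝓕 k (u - x) = 𝓕 (fun t => 𝓕 F t * k t) (-x) := by
  have htranslate (u : ℝ) : 𝓕 k (u - x) = 𝓕 (fun t => 𝐞 (x * t) • k t) u := by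
    simp_rw [Real.fourier_real_eq, smul_smul, ← AddChar.map_add_eq_mul, mul_sub, neg_sub,
      mul_comm x, neg_add_eq_sub]
  have hk' : Integrable (fun t => 𝐞 (x * t) • k t) := by
    simpa using (Real.fourierIntegral_convergent_iff (-x)).2 hk
  calc ∫ u, F u * 𝓕 k (u - x) = ∫ u, F u * 𝓕 (fun t => 𝐞 (x * t) • k t) u := by
        simp_rw [htranslate]
    _ = ∫ t, 𝓕 F t * 𝐞 (x * t) • k t := by
        have := VectorFourier.integral_fourierIntegral_smul_eq_flip (L := innerₗ ℝ)
          Real.continuous_fourierChar continuous_inner hF hk'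
        rw [flip_innerₗ] at this
        exact this.symm
    _ = 𝓕 (fun t => 𝓕 F t * k t) (-x) := by
        simp [Real.fourier_real_eq (fun t => 𝓕 F t * k t), mul_comm x, mul_smul_comm]

section Laplace

variable {H : ℝ → ℂ} {C : ℝ}

lemma integrable_mul_exp_neg (hH : AEStronglyMeasurable H) (hC : ∀ u, ‖H u‖ ≤ C)
    (hneg : ∀ u < 0, H u = 0) {z : ℂ} (hz : 0 < z.re) :
    Integrable (fun u : ℝ => H u * Complex.exp (-z * u)) := by
  have hsupp : Function.support (fun u : ℝ => H u * Complex.exp (-z * u)) ⊆ Set.Ici 0 := by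
    intro u hu
    by_contra! h
    simp [hneg u (by simpa using h)] at hu
  rw [← integrableOn_iff_integrable_of_support_subset hsupp, integrableOn_Ici_iff_integrableOn_Ioi]
  exact (integrableOn_exp_mul_complex_Ioi (by simpa using hz) 0).bdd_mul hH.restrict
    (.of_forall hC)

lemma continuousWithinAt_integral_mul_exp_neg_mul (hH : AEStronglyMeasurable H)
    (hC : ∀ u, ‖H u‖ ≤ C) (hneg : ∀ u < 0, H u = 0) {φ : ℝ → ℂ} (hφ : Integrable φ) :
    ContinuousWithinAt (fun δ : ℝ => ∫ u, H u * Complex.exp (-δ * u) * φ u) (Set.Ici 0) 0 := by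
  refine continuousWithinAt_of_dominated (bound := fun u => C * ‖φ u‖)
    (.of_forall fun δ => ?_) ?_ (hφ.norm.const_mul C) (.of_forall fun u => by fun_prop)
  · exact (hH.mul (by fun_prop)).mul hφ.aestronglyMeasurable
  · filter_upwards [self_mem_nhdsWithin] with δ (hδ : 0 ≤ δ)
    filter_upwards with u
    rw [norm_mul, norm_mul]
    gcongr
    rcases lt_or_ge u 0 with hu | hu
    · simpa [hneg u hu] using hC u
    · refine (mul_le_of_le_one_right (norm_nonneg _) ?_).trans (hC u)
      simpa [Complex.norm_exp] using mul_nonneg hδ hu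

lemma continuousOn_fourier_comp_vertical_mul {g : ℂ → ℂ} {k : ℝ → ℂ}
    (hg : ContinuousOn g {z | 0 ≤ z.re}) (hk : Continuous k) (hk_supp : HasCompactSupport k)
    (x : ℝ) :
    ContinuousOn (fun δ : ℝ => 𝓕 (fun t : ℝ => g (δ + 2 * π * t * Complex.I) * k t) x)
      (Set.Ici 0) := by
  simp_rw [Real.fourier_real_eq_integral_exp_smul]
  refine continuousOn_integral_of_compact_support hk_supp.isCompact ?_ fun δ t _ ht => by
    simp [image_eq_zero_of_notMem_tsupport ht]
  have hg' : ContinuousOn (fun p : ℝ × ℝ => g (p.1 + 2 * π * p.2 * Complex.I))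
      (Set.Ici 0 ×ˢ Set.univ) := hg.comp (by fun_prop) fun p hp => by simpa using hp.1
  have hk' : Continuous fun p : ℝ × ℝ => k p.2 := by fun_prop
  have hexp : Continuous fun p : ℝ × ℝ => Complex.exp (↑(-2 * π * p.2 * x) * Complex.I) := by
    fun_prop
  exact hexp.continuousOn.smul (hg'.mul hk'.continuousOn)

-- The multiplication formula for the damped function `u ↦ H u * exp (-δ u)`, as `δ → 0`.
theorem integral_mul_fourier_sub_of_laplace {k : ℝ → ℂ} {g : ℂ → ℂ}
    (hH : AEStronglyMeasurable H) (hC : ∀ u, ‖H u‖ ≤ C) (hneg : ∀ u < 0, H u = 0)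
    (hlaplace : ∀ z : ℂ, 0 < z.re → ∫ u : ℝ, H u * Complex.exp (-z * u) = g z)
    (hg : ContinuousOn g {z | 0 ≤ z.re}) (hk : Continuous k) (hk_supp : HasCompactSupport k)
    (hk_int : Integrable (𝓕 k)) (x : ℝ) :
    ∫ u, H u * 𝓕 k (u - x) = 𝓕 (fun t : ℝ => g (2 * π * t * Complex.I) * k t) (-x) := by
  have hdamped : ∀ᶠ δ : ℝ in 𝓝[>] 0, ∫ u, H u * Complex.exp (-δ * u) * 𝓕 k (u - x) =
      𝓕 (fun t : ℝ => g (δ + 2 * π * t * Complex.I) * k t) (-x) := by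
    filter_upwards [self_mem_nhdsWithin] with δ (hδ : 0 < δ)
    have hfourier (t : ℝ) : 𝓕 (fun u : ℝ => H u * Complex.exp (-δ * u)) t =
        g (δ + 2 * π * t * Complex.I) := by
      rw [← hlaplace _ (by simpa using hδ), Real.fourier_real_eq_integral_exp_smul]
      refine integral_congr_ae (.of_forall fun u => ?_)
      simp only [smul_eq_mul]
      rw [mul_left_comm, ← Complex.exp_add]
      push_cast
      ring_nf
    simp_rw [integral_mul_fourier_sub (integrable_mul_exp_neg hH hC hneg (z := δ) hδ)
      (hk.integrable_of_hasCompactSupport hk_supp), hfourier]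
  have hleft := (continuousWithinAt_integral_mul_exp_neg_mul hH hC hneg
    (hk_int.comp_sub_right x)).tendsto.mono_left (nhdsWithin_mono _ Set.Ioi_subset_Ici_self)
  have hright := (continuousOn_fourier_comp_vertical_mul hg hk hk_supp (-x) 0
    (by simp)).tendsto.mono_left (nhdsWithin_mono _ Set.Ioi_subset_Ici_self)
  simpa using tendsto_nhds_unique hleft (hright.congr' (hdamped.mono fun _ => Eq.symm))

theorem tendsto_integral_mul_fourier_sub_of_laplace {k : ℝ → ℂ} {g : ℂ → ℂ}
    (hH : AEStronglyMeasurable H) (hC : ∀ u, ‖H u‖ ≤ C) (hneg : ∀ u < 0, H u = 0)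
    (hlaplace : ∀ z : ℂ, 0 < z.re → ∫ u : ℝ, H u * Complex.exp (-z * u) = g z)
    (hg : ContinuousOn g {z | 0 ≤ z.re}) (hk : Continuous k) (hk_supp : HasCompactSupport k)
    (hk_int : Integrable (𝓕 k)) :
    Tendsto (fun x => ∫ u, H u * 𝓕 k (u - x)) atTop (𝓝 0) := by
  simp_rw [integral_mul_fourier_sub_of_laplace hH hC hneg hlaplace hg hk hk_supp hk_int]
  exact (Real.zero_at_infty_fourier _).comp
    (tendsto_neg_atTop_atBot.mono_right atBot_le_cocompact)

theorem tendsto_integral_comp_add_div_mul_fourier_of_laplace {k : ℝ → ℂ} {g : ℂ → ℂ}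
    (hH : Measurable H) (hC : ∀ u, ‖H u‖ ≤ C) (hneg : ∀ u < 0, H u = 0)
    (hlaplace : ∀ z : ℂ, 0 < z.re → ∫ u : ℝ, H u * Complex.exp (-z * u) = g z)
    (hg : ContinuousOn g {z | 0 ≤ z.re}) (hk : Continuous k) (hk_supp : HasCompactSupport k)
    (hk_int : Integrable (𝓕 k)) {T : ℝ} (hT : 0 < T) :
    Tendsto (fun x => ∫ v, H (x + v / T) * 𝓕 k v) atTop (𝓝 0) := by
  have hlaplace' (z : ℂ) (hz : 0 < z.re) :
      ∫ u : ℝ, H (u / T) * Complex.exp (-z * u) = T * g (T * z) := by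
    rw [← hlaplace (T * z) (by simpa using mul_pos hT hz)]
    have := Measure.integral_comp_div (fun u : ℝ => H u * Complex.exp (-(T * z) * u)) T
    rw [abs_of_pos hT, Complex.real_smul] at this
    rw [← this]
    have hT' : (T : ℂ) ≠ 0 := mod_cast hT.ne'
    congr! 4 with u
    push_cast
    field_simp
  have hg' : ContinuousOn (fun z => T * g (T * z)) {z | 0 ≤ z.re} :=
    continuousOn_const.mul <| hg.comp (by fun_prop) fun z (hz : 0 ≤ z.re) => by
      simpa using mul_nonneg hT.le hz
  have hdilate := tendsto_integral_mul_fourier_sub_of_laplace (H := fun u => H (u / T))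
    (hH.comp (measurable_id.div_const T)).aestronglyMeasurable (fun u => hC (u / T))
    (fun u hu => hneg _ (div_neg_of_neg_of_pos hu hT)) hlaplace' hg' hk hk_supp hk_int
  refine (hdilate.comp (tendsto_id.const_mul_atTop hT)).congr fun x => ?_
  rw [Function.comp_apply, ← integral_add_right_eq_self _ (T * id x)]
  congr! 3
  · field_simp
    simp [add_comm]
  · simp

end Laplace

section Tauberian

variable {B K : ℝ → ℝ} {C : ℝ}

lemma le_mul_exp_sub_of_monotone_mul_exp (hmono : Monotone fun u => B u * Real.exp u) {s t : ℝ}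
    (hst : s ≤ t) : B s ≤ B t * Real.exp (t - s) := by
  rw [Real.exp_sub, ← mul_div_assoc, le_div_iff₀ (Real.exp_pos s)]
  exact hmono hst

lemma measurable_of_monotone_mul_exp (hmono : Monotone fun u => B u * Real.exp u) :
    Measurable B := by
  have : B = fun u => B u * Real.exp u * Real.exp (-u) := by
    ext u
    rw [mul_assoc, ← Real.exp_add, add_neg_cancel, Real.exp_zero, mul_one]
  rw [this]
  exact hmono.measurable.mul (by fun_prop)

lemma integrable_comp_add_div_mul (hB : 0 ≤ B) (hC : ∀ u, B u ≤ C)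
    (hmono : Monotone fun u => B u * Real.exp u) (hK : Integrable K) (x T : ℝ) :
    Integrable fun v => B (x + v / T) * K v :=
  hK.bdd_mul ((measurable_of_monotone_mul_exp hmono).comp (by fun_prop)).aestronglyMeasurable
    (.of_forall fun v => (Real.norm_of_nonneg (hB _)).trans_le (hC _))

lemma mul_exp_mul_setIntegral_le_integral_comp_add_div (hB : 0 ≤ B) (hC : ∀ u, B u ≤ C)
    (hmono : Monotone fun u => B u * Real.exp u) (hK : Integrable K) (hK0 : 0 ≤ K)
    {h T : ℝ} (hT : 0 < T) (y : ℝ) :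
    B y * Real.exp (-(2 * h)) * ∫ v in Set.Icc (-(h * T)) (h * T), K v ≤
      ∫ v, B (y + h + v / T) * K v := by
  have hint := integrable_comp_add_div_mul hB hC hmono hK (y + h) T
  calc _ = ∫ v in Set.Icc (-(h * T)) (h * T), B y * Real.exp (-(2 * h)) * K v :=
        (integral_const_mul _ _).symm
    _ ≤ ∫ v in Set.Icc (-(h * T)) (h * T), B (y + h + v / T) * K v := by
        refine setIntegral_mono_on (hK.const_mul _).integrableOn hint.integrableOn
          measurableSet_Icc fun v hv => mul_le_mul_of_nonneg_right ?_ (hK0 v)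
        have hlow : -h ≤ v / T := by rw [le_div_iff₀ hT]; linarith [hv.1]
        have hupp : v / T ≤ h := by rw [div_le_iff₀ hT]; exact hv.2
        rw [Real.exp_neg, ← div_eq_mul_inv, div_le_iff₀ (Real.exp_pos _)]
        refine (le_mul_exp_sub_of_monotone_mul_exp hmono
          (by linarith : y ≤ y + h + v / T)).trans ?_
        gcongr
        · exact hB _
        · linarith
    _ ≤ _ := setIntegral_le_integral hint (.of_forall fun v => mul_nonneg (hB _) (hK0 v))

lemma integral_comp_add_div_le_mul_exp_mul_integral (hB : 0 ≤ B) (hC : ∀ u, B u ≤ C)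
    (hmono : Monotone fun u => B u * Real.exp u) (hK : Integrable K) (hK0 : 0 ≤ K)
    {h T : ℝ} (hT : 0 < T) (y : ℝ) :
    ∫ v, B (y - h + v / T) * K v ≤
      B y * Real.exp (2 * h) * (∫ v, K v) +
        C * ((∫ v, K v) - ∫ v in Set.Icc (-(h * T)) (h * T), K v) := by
  have hint := integrable_comp_add_div_mul hB hC hmono hK (y - h) T
  have hcenter : ∫ v in Set.Icc (-(h * T)) (h * T), B (y - h + v / T) * K v ≤
      ∫ v, B y * Real.exp (2 * h) * K v := by
    refine (setIntegral_mono_on hint.integrableOn (hK.const_mul _).integrableOn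
      measurableSet_Icc fun v hv => mul_le_mul_of_nonneg_right ?_ (hK0 v)).trans
      (setIntegral_le_integral (hK.const_mul (B y * Real.exp (2 * h))) (.of_forall fun v =>
        mul_nonneg (mul_nonneg (hB y) (Real.exp_pos _).le) (hK0 v)))
    have hlow : -h ≤ v / T := by rw [le_div_iff₀ hT]; linarith [hv.1]
    have hupp : v / T ≤ h := by rw [div_le_iff₀ hT]; exact hv.2
    refine (le_mul_exp_sub_of_monotone_mul_exp hmono (by linarith : y - h + v / T ≤ y)).trans ?_
    gcongr
    · exact hB y
    · linarith
  have htail : ∫ v in (Set.Icc (-(h * T)) (h * T))ᶜ, B (y - h + v / T) * K v ≤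
      ∫ v in (Set.Icc (-(h * T)) (h * T))ᶜ, C * K v :=
    setIntegral_mono hint.integrableOn (hK.const_mul C).integrableOn fun v =>
      mul_le_mul_of_nonneg_right (hC _) (hK0 v)
  rw [integral_const_mul] at hcenter htail
  rw [← integral_add_compl measurableSet_Icc hint,
    ← setIntegral_compl measurableSet_Icc hK]
  exact add_le_add hcenter htail

lemma tendsto_setIntegral_Icc_neg_self (hK : Integrable K) :
    Tendsto (fun n : ℕ => ∫ v in Set.Icc (-(n : ℝ)) n, K v) atTop (𝓝 (∫ v, K v)) :=
  (aecover_Icc (tendsto_neg_atTop_atBot.comp tendsto_natCast_atTop_atTop)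
    tendsto_natCast_atTop_atTop).integral_tendsto_of_countably_generated hK

-- Monotonicity of `B u * exp u` compares `B y` with `B` on `[y, y + 2h]` and on `[y - 2h, y]`.
-- For `h = 1 / n` and `T = n ^ 2`, the length `h` tends to `0` while the window `[-hT, hT]`
-- exhausts the mass of `K`.
theorem tendsto_of_tendsto_integral_comp_add_div {A : ℝ} (hB : 0 ≤ B) (hC : ∀ u, B u ≤ C)
    (hmono : Monotone fun u => B u * Real.exp u) (hK : Integrable K) (hK0 : 0 ≤ K)
    (hK_pos : 0 < ∫ v, K v)
    (hlim : ∀ T : ℝ, 0 < T →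
      Tendsto (fun x => ∫ v, B (x + v / T) * K v) atTop (𝓝 (A * ∫ v, K v))) :
    Tendsto B atTop (𝓝 A) := by
  have hexp (c : ℝ) : Tendsto (fun n : ℕ => Real.exp (c * (1 / (n : ℝ)))) atTop (𝓝 1) := by
    simpa using (tendsto_one_div_atTop_nhds_zero_nat (𝕜 := ℝ)).const_mul c |>.rexp
  have hmass := tendsto_setIntegral_Icc_neg_self hK
  have hscale {n : ℕ} (hn : 0 < n) : 1 / (n : ℝ) * n ^ 2 = n := by field_simp
  have hsq {n : ℕ} (hn : 0 < n) : 0 < (n : ℝ) ^ 2 := by positivity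
  refine tendsto_order.2 ⟨fun a ha => ?_, fun a ha => ?_⟩
  · have hlt := ((((hexp 2).const_mul a).mul_const (∫ v, K v)).add
      ((hmass.const_sub (∫ v, K v)).const_mul C)).eventually_lt_const (u := A * ∫ v, K v)
      (by simpa using mul_lt_mul_of_pos_right ha hK_pos)
    obtain ⟨n, hn, hn0⟩ := (hlt.and (eventually_gt_atTop 0)).exists
    have hshift : Tendsto (fun y : ℝ => y - 1 / (n : ℝ)) atTop atTop :=
      tendsto_atTop_add_const_right _ _ tendsto_id
    filter_upwards [((hlim _ (hsq hn0)).comp hshift).eventually_const_lt hn] with y hy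
    have hle := hy.trans_le
      (integral_comp_add_div_le_mul_exp_mul_integral hB hC hmono hK hK0 (hsq hn0) y)
    rw [hscale hn0, add_lt_add_iff_right] at hle
    exact lt_of_mul_lt_mul_right (lt_of_mul_lt_mul_right hle hK_pos.le) (Real.exp_pos _).le
  · have hlt := (((hexp (-2)).const_mul a).mul hmass).eventually_const_lt (u := A * ∫ v, K v)
      (by simpa using mul_lt_mul_of_pos_right ha hK_pos)
    obtain ⟨n, hn, hn0⟩ := (hlt.and (eventually_gt_atTop 0)).exists
    have hshift : Tendsto (fun y : ℝ => y + 1 / (n : ℝ)) atTop atTop :=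
      tendsto_atTop_add_const_right _ _ tendsto_id
    filter_upwards [((hlim _ (hsq hn0)).comp hshift).eventually_lt_const hn] with y hy
    have hle := (mul_exp_mul_setIntegral_le_integral_comp_add_div
      hB hC hmono hK hK0 (hsq hn0) y).trans_lt hy
    rw [hscale hn0, neg_mul_eq_neg_mul] at hle
    refine lt_of_mul_lt_mul_right (lt_of_mul_lt_mul_right hle ?_) (Real.exp_pos _).le
    exact setIntegral_nonneg measurableSet_Icc fun v _ => hK0 v

end Tauberian

lemma integral_indicator_Ici_mul_exp_neg (A : ℂ) {z : ℂ} (hz : 0 < z.re) :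
    ∫ u : ℝ, (Set.Ici 0).indicator (fun _ => A) u * Complex.exp (-z * u) = A / z := by
  have hz' : (-z).re < 0 := by simpa using hz
  have hmul (u : ℝ) : (Set.Ici 0).indicator (fun _ => A) u * Complex.exp (-z * u) =
      (Set.Ici 0).indicator (fun u : ℝ => A * Complex.exp (-z * u)) u :=
    (Set.indicator_mul_left _ (fun _ => A) fun u : ℝ => Complex.exp (-z * u)).symm
  simp_rw [hmul]
  rw [integral_indicator measurableSet_Ici, integral_Ici_eq_integral_Ioi, integral_const_mul,
    integral_exp_mul_complex_Ioi hz']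
  simp [div_eq_mul_inv]

lemma tendsto_integral_indicator_comp_add_div_mul {K : ℝ → ℂ} (hK : Integrable K) (A : ℂ)
    (T : ℝ) :
    Tendsto (fun x : ℝ => ∫ v, (Set.Ici 0).indicator (fun _ => A) (x + v / T) * K v) atTop
      (𝓝 (A * ∫ v, K v)) := by
  rw [← integral_const_mul]
  refine tendsto_integral_filter_of_dominated_convergence (fun v => ‖A‖ * ‖K v‖)
    (.of_forall fun x => ?_) (.of_forall fun x => .of_forall fun v => ?_)
    (hK.norm.const_mul _) (.of_forall fun v => ?_)
  · exact ((measurable_const.indicator measurableSet_Ici).comp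
      (by fun_prop)).aestronglyMeasurable.mul hK.aestronglyMeasurable
  · rw [norm_mul]
    gcongr
    exact norm_indicator_le_norm_self (fun _ => A) _
  · refine tendsto_const_nhds.congr' ?_
    filter_upwards [eventually_ge_atTop (-(v / T))] with x hx
    rw [Set.indicator_of_mem (Set.mem_Ici.2 (by linarith))]

theorem tendsto_integral_comp_add_div_mul_fourier_of_laplace_pole {B : ℝ → ℂ} {A : ℂ} {C : ℝ}
    {k : ℝ → ℂ} {g : ℂ → ℂ} (hB : Measurable B) (hC : ∀ u, ‖B u‖ ≤ C) (hneg : ∀ u < 0, B u = 0)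
    (hlaplace : ∀ z : ℂ, 0 < z.re → ∫ u : ℝ, B u * Complex.exp (-z * u) = g z + A / z)
    (hg : ContinuousOn g {z | 0 ≤ z.re}) (hk : Continuous k) (hk_supp : HasCompactSupport k)
    (hk_int : Integrable (𝓕 k)) {T : ℝ} (hT : 0 < T) :
    Tendsto (fun x => ∫ v, B (x + v / T) * 𝓕 k v) atTop (𝓝 (A * ∫ v, 𝓕 k v)) := by
  let I : ℝ → ℂ := (Set.Ici 0).indicator fun _ => A
  have hI : Measurable I := measurable_const.indicator measurableSet_Ici
  have hI_le (u : ℝ) : ‖I u‖ ≤ ‖A‖ := norm_indicator_le_norm_self (fun _ => A) u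
  have hI_neg (u : ℝ) (hu : u < 0) : I u = 0 := Set.indicator_of_notMem (by simpa using hu) _
  have hlaplace' (z : ℂ) (hz : 0 < z.re) :
      ∫ u : ℝ, (B u - I u) * Complex.exp (-z * u) = g z := by
    simp_rw [sub_mul]
    rw [integral_sub (integrable_mul_exp_neg hB.aestronglyMeasurable hC hneg hz)
      (integrable_mul_exp_neg hI.aestronglyMeasurable hI_le hI_neg hz), hlaplace z hz,
      integral_indicator_Ici_mul_exp_neg A hz, add_sub_cancel_right]
  have hdiff := tendsto_integral_comp_add_div_mul_fourier_of_laplace (hB.sub hI)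
    (fun u => (norm_sub_le _ _).trans (add_le_add (hC u) (hI_le u)))
    (fun u hu => by simp [hneg u hu, hI_neg u hu]) hlaplace' hg hk hk_supp hk_int hT
  have hsum := hdiff.add (tendsto_integral_indicator_comp_add_div_mul hk_int A T)
  rw [zero_add] at hsum
  refine hsum.congr fun x => ?_
  rw [← integral_add]
  · simp [I, sub_mul]
  · exact hk_int.bdd_mul ((hB.sub hI).comp (by fun_prop)).aestronglyMeasurable
      (.of_forall fun v => (norm_sub_le _ _).trans (add_le_add (hC _) (hI_le _)))
  · exact hk_int.bdd_mul (hI.comp (by fun_prop)).aestronglyMeasurable (.of_forall fun v => hI_le _)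

theorem tendsto_of_laplace_eq_add_div {B : ℝ → ℝ} {A C : ℝ} {g : ℂ → ℂ} (hB : 0 ≤ B)
    (hC : ∀ u, B u ≤ C) (hneg : ∀ u < 0, B u = 0) (hmono : Monotone fun u => B u * Real.exp u)
    (hg : ContinuousOn g {z | 0 ≤ z.re})
    (hlaplace : ∀ z : ℂ, 0 < z.re → ∫ u : ℝ, (B u : ℂ) * Complex.exp (-z * u) = g z + A / z) :
    Tendsto B atTop (𝓝 A) := by
  obtain ⟨k, K, hk, hk_supp, hkK, hK0, hK, hK_pos⟩ := exists_fourier_eq_ofReal_nonneg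
  have hmeas : Measurable fun u => (B u : ℂ) :=
    Complex.measurable_ofReal.comp (measurable_of_monotone_mul_exp hmono)
  have hbound (u : ℝ) : ‖(B u : ℂ)‖ ≤ C := by
    rw [Complex.norm_real, Real.norm_of_nonneg (hB u)]
    exact hC u
  refine tendsto_of_tendsto_integral_comp_add_div hB hC hmono hK hK0 hK_pos fun T hT => ?_
  have hmean := tendsto_integral_comp_add_div_mul_fourier_of_laplace_pole hmeas hbound
    (fun u hu => by simp [hneg u hu]) hlaplace hg hk hk_supp
    (hK.ofReal.congr (.of_forall fun v => (hkK v).symm)) hT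
  simpa [Function.comp_def, hkK, ← Complex.ofReal_mul, integral_complex_ofReal] using
    (Complex.continuous_re.tendsto _).comp hmean

section WienerIkehara

variable {a : ℕ → ℝ} {C : ℝ}

/-- The normalized summatory function `u ↦ e⁻ᵘ ∑_{k ≤ eᵘ} a k`. In this exponential variable the
Laplace transform of the means of `a` is `L(a, 1 + z) / (1 + z)`, see
`integral_expMean_mul_exp_neg`. -/
noncomputable def expMean (a : ℕ → ℝ) (u : ℝ) : ℝ :=
  (∑ k ∈ Finset.Icc 1 ⌊Real.exp u⌋₊, a k) * Real.exp (-u)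

lemma expMean_mul_exp (u : ℝ) :
    expMean a u * Real.exp u = ∑ k ∈ Finset.Icc 1 ⌊Real.exp u⌋₊, a k := by
  rw [expMean, mul_assoc, ← Real.exp_add, neg_add_cancel, Real.exp_zero, mul_one]

lemma expMean_log_natCast {n : ℕ} (hn : 0 < n) :
    expMean a (Real.log n) = (∑ k ∈ Finset.Icc 1 n, a k) / n := by
  rw [expMean, Real.exp_neg, Real.exp_log (by positivity), Nat.floor_natCast, div_eq_mul_inv]

lemma expMean_of_neg {u : ℝ} (hu : u < 0) : expMean a u = 0 := by
  have : ⌊Real.exp u⌋₊ = 0 := by simpa [Nat.floor_eq_zero] using hu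
  simp [expMean, this]

lemma expMean_nonneg (ha : 0 ≤ a) : 0 ≤ expMean a := fun _ =>
  mul_nonneg (Finset.sum_nonneg fun k _ => ha k) (Real.exp_pos _).le

lemma expMean_le (ha : 0 ≤ a) (hC : ∀ n : ℕ, ∑ k ∈ Finset.Icc 1 n, a k ≤ C * n) (u : ℝ) :
    expMean a u ≤ C := by
  have hC0 : 0 ≤ C := by simpa using (ha 1).trans (by simpa using hC 1)
  rw [← mul_le_mul_iff_left₀ (Real.exp_pos u), expMean_mul_exp]
  exact (hC _).trans (mul_le_mul_of_nonneg_left (Nat.floor_le (Real.exp_pos u).le) hC0)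

lemma monotone_expMean_mul_exp (ha : 0 ≤ a) : Monotone fun u => expMean a u * Real.exp u := by
  simp_rw [expMean_mul_exp]
  refine fun u v huv => Finset.sum_le_sum_of_subset_of_nonneg ?_ fun k _ _ => ha k
  gcongr

lemma integral_expMean_mul_exp_neg (ha : 0 ≤ a)
    (hC : ∀ n : ℕ, ∑ k ∈ Finset.Icc 1 n, a k ≤ C * n) {z : ℂ} (hz : 0 < z.re) :
    ∫ u : ℝ, (expMean a u : ℂ) * Complex.exp (-z * u) =
      LSeries (fun n => (a n : ℂ)) (1 + z) / (1 + z) := by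
  have hz1 : 1 < (1 + z).re := by simpa using hz
  have hO : (fun n : ℕ => ∑ k ∈ Finset.Icc 1 n, a k) =O[atTop] fun n : ℕ => (n : ℝ) ^ (1 : ℝ) := by
    refine .of_bound C (.of_forall fun n => ?_)
    rw [Real.rpow_one, Real.norm_of_nonneg (Finset.sum_nonneg fun k _ => ha k),
      Real.norm_of_nonneg (Nat.cast_nonneg n)]
    exact hC n
  rw [eq_div_iff (Complex.ne_zero_of_one_lt_re hz1), mul_comm,
    LSeries_eq_mul_integral_of_nonneg a zero_le_one hz1 hO ha]
  congr 1
  rw [← Real.exp_zero, ← integral_comp_exp_Ioi, ← integral_Ici_eq_integral_Ioi,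
    ← setIntegral_eq_integral_of_forall_compl_eq_zero (s := Set.Ici 0) fun u hu => by
      simp [expMean_of_neg (not_le.1 hu)]]
  refine setIntegral_congr_fun measurableSet_Ici fun u _ => ?_
  have hexp : Complex.exp u * Complex.exp (u * -(1 + z + 1)) =
      Complex.exp (-u) * Complex.exp (-z * u) := by
    simp_rw [← Complex.exp_add]
    ring_nf
  rw [Complex.cpow_def_of_ne_zero (by exact_mod_cast (Real.exp_pos u).ne'),
    ← Complex.ofReal_log (Real.exp_pos u).le, Real.log_exp, Complex.real_smul, mul_left_comm,
    Complex.ofReal_exp, hexp, expMean]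
  push_cast
  ring

theorem tendsto_sum_div_of_LSeries_eq_add_div {A : ℝ} {G : ℂ → ℂ} (ha : 0 ≤ a)
    (hC : ∀ n : ℕ, ∑ k ∈ Finset.Icc 1 n, a k ≤ C * n) (hG : ContinuousOn G {s | 1 ≤ s.re})
    (hLSeries : ∀ s : ℂ, 1 < s.re → LSeries (fun n => (a n : ℂ)) s = G s + A / (s - 1)) :
    Tendsto (fun n : ℕ => (∑ k ∈ Finset.Icc 1 n, a k) / n) atTop (𝓝 A) := by
  have hne {z : ℂ} (hz : 0 ≤ z.re) : 1 + z ≠ 0 := fun h => by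
    have := congrArg Complex.re h
    rw [Complex.add_re, Complex.one_re, Complex.zero_re] at this
    linarith
  have hlaplace (z : ℂ) (hz : 0 < z.re) : ∫ u : ℝ, (expMean a u : ℂ) * Complex.exp (-z * u) =
      (G (1 + z) - A) / (1 + z) + A / z := by
    have hz0 : z ≠ 0 := fun h => by simp [h] at hz
    rw [integral_expMean_mul_exp_neg ha hC hz, hLSeries _ (by simpa using hz), add_sub_cancel_left]
    field_simp [hne hz.le]
    ring
  have hg : ContinuousOn (fun z => (G (1 + z) - A) / (1 + z)) {z | 0 ≤ z.re} :=
    ((hG.comp (by fun_prop) fun z hz => by simpa using hz).sub continuousOn_const).div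
      (by fun_prop) fun z hz => hne hz
  have hlim := tendsto_of_laplace_eq_add_div (expMean_nonneg ha) (expMean_le ha hC)
    (fun u => expMean_of_neg) (monotone_expMean_mul_exp ha) hg hlaplace
  refine (hlim.comp (Real.tendsto_log_atTop.comp tendsto_natCast_atTop_atTop)).congr' ?_
  filter_upwards [eventually_gt_atTop 0] with n hn using expMean_log_natCast hn

end WienerIkehara

section PrimesInResidueClass

variable {q : ℕ}

/-- The Chebyshev function `θ(n; q, a)`: the sum of `log p` over the primes `p ≤ n` in the residue
class `a` modulo `q`. -/
noncomputable def thetaMod (a : ZMod q) (n : ℕ) : ℝ :=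
  ∑ p ∈ n.primesLE with ((p : ℕ) : ZMod q) = a, Real.log p

lemma thetaMod_nonneg (a : ZMod q) (n : ℕ) : 0 ≤ thetaMod a n :=
  Finset.sum_nonneg fun p _ => Real.log_natCast_nonneg p

open ArithmeticFunction in
lemma sum_residueClass_sub_thetaMod (a : ZMod q) (n : ℕ) :
    ∑ k ∈ Finset.Icc 1 n, vonMangoldt.residueClass a k - thetaMod a n =
      ∑ k ∈ Finset.Icc 1 n with ¬ k.Prime, vonMangoldt.residueClass a k := by
  rw [sub_eq_iff_eq_add, ← Finset.sum_filter_not_add_sum_filter _ (fun k : ℕ => k.Prime),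
    thetaMod, Nat.primesLE_eq_filter_Icc_one,
    Finset.sum_filter (p := fun p : ℕ => (p : ZMod q) = a)]
  refine congrArg _ (Finset.sum_congr rfl fun p hp => ?_)
  rw [vonMangoldt.residueClass, Set.indicator_apply,
    vonMangoldt_apply_prime (Finset.mem_filter.1 hp).2]
  rfl

open ArithmeticFunction in
lemma tendsto_sum_residueClass_div [NeZero q] {a : ZMod q} (ha : IsUnit a) :
    Tendsto (fun n : ℕ => (∑ k ∈ Finset.Icc 1 n, vonMangoldt.residueClass a k) / n) atTop
      (𝓝 (q.totient : ℝ)⁻¹) := by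
  refine tendsto_sum_div_of_LSeries_eq_add_div (C := Real.log 4 + 4)
    (vonMangoldt.residueClass_nonneg a) (fun n => ?_)
    (vonMangoldt.continuousOn_LFunctionResidueClassAux a) fun s hs => ?_
  · refine le_trans ?_ (Chebyshev.psi_le_const_mul_self n.cast_nonneg)
    rw [Chebyshev.psi, Nat.floor_natCast, ← Finset.Icc_add_one_left_eq_Ioc]
    exact Finset.sum_le_sum fun k _ => vonMangoldt.residueClass_le a k
  · rw [vonMangoldt.eqOn_LFunctionResidueClassAux ha hs]
    push_cast
    ring

open ArithmeticFunction in
/-- The prime number theorem in arithmetic progressions. Proper prime powers only contribute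
`O(√n)` to the sum of the von Mangoldt function. -/
theorem tendsto_thetaMod_div [NeZero q] {a : ZMod q} (ha : IsUnit a) :
    Tendsto (fun n : ℕ => thetaMod a n / n) atTop (𝓝 (q.totient : ℝ)⁻¹) := by
  obtain ⟨C, hC⟩ := Chebyshev.psi_sub_theta_le_mul_sqrt
  have hnonneg (n : ℕ) :
      0 ≤ ∑ k ∈ Finset.Icc 1 n, vonMangoldt.residueClass a k - thetaMod a n := by
    rw [sum_residueClass_sub_thetaMod]
    exact Finset.sum_nonneg fun k _ => vonMangoldt.residueClass_nonneg a k
  have hle (n : ℕ) :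
      ∑ k ∈ Finset.Icc 1 n, vonMangoldt.residueClass a k - thetaMod a n ≤ C * √n := by
    refine le_trans ?_ (hC n)
    rw [sum_residueClass_sub_thetaMod, Chebyshev.psi_sub_theta_eq_sum_not_prime,
      Nat.floor_natCast, ← Finset.Icc_add_one_left_eq_Ioc]
    exact Finset.sum_le_sum fun k _ => vonMangoldt.residueClass_le a k
  have hsqrt : Tendsto (fun n : ℕ => C * √n / n) atTop (𝓝 0) := by
    simp_rw [mul_div_assoc, Real.sqrt_div_self]
    simpa using (Real.tendsto_sqrt_atTop.comp
      tendsto_natCast_atTop_atTop).inv_tendsto_atTop.const_mul C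
  have hpow := squeeze_zero (fun n => div_nonneg (hnonneg n) n.cast_nonneg)
    (fun n => div_le_div_of_nonneg_right (hle n) n.cast_nonneg) hsqrt
  simpa [sub_div] using (tendsto_sum_residueClass_div ha).sub hpow

end PrimesInResidueClass

section UniformBound

variable {q a N n : ℕ}

open scoped Nat

lemma dvd_prod_add_mul_of_coprime {m : ℕ} (hm : m ∣ N !) (hqm : q.Coprime m) :
    m ∣ ∏ i ∈ Finset.range N, (a + q * i) := by
  have : NeZero m := ⟨ne_zero_of_dvd_ne_zero N.factorial_ne_zero hm⟩
  set r : ℕ := ((q : ZMod m)⁻¹ * a).val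
  have hr : (q : ZMod m) * r = a := by
    rw [ZMod.natCast_zmod_val, ← mul_assoc, ZMod.coe_mul_inv_eq_one _ hqm, one_mul]
  have hascFactorial : (r.ascFactorial N : ZMod m) = 0 :=
    (ZMod.natCast_eq_zero_iff _ _).2 (hm.trans (Nat.factorial_dvd_ascFactorial r N))
  rw [← ZMod.natCast_eq_zero_iff]
  calc ((∏ i ∈ Finset.range N, (a + q * i) : ℕ) : ZMod m)
      = ∏ i ∈ Finset.range N, (q : ZMod m) * (r + i) := by
        push_cast
        exact Finset.prod_congr rfl fun i _ => by rw [mul_add, hr]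
    _ = q ^ N * (r.ascFactorial N : ZMod m) := by
        simp [Finset.prod_mul_distrib, Nat.ascFactorial_eq_prod_range]
    _ = 0 := by rw [hascFactorial, mul_zero]

lemma factorial_dvd_pow_mul_prod_add_mul (q a N : ℕ) :
    N ! ∣ q ^ N * ∏ i ∈ Finset.range N, (a + q * i) := by
  refine (Nat.dvd_iff_prime_pow_dvd_dvd _ _).2 fun p k hp hpk => ?_
  by_cases hpq : p ∣ q
  · have hkN : k ≤ N := by
      have hfac := (hp.pow_dvd_iff_le_factorization N.factorial_ne_zero).1 hpk
      exact hfac.trans ((Nat.factorization_factorial_le_div_pred hp N).trans (Nat.div_le_self _ _))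
    exact ((pow_dvd_pow p hkN).trans (pow_dvd_pow_of_dvd hpq N)).mul_right _
  · exact (dvd_prod_add_mul_of_coprime hpk
      ((hp.coprime_iff_not_dvd.2 hpq).symm.pow_right k)).mul_left _

-- The product of the primes divides that of the progression and is coprime to `N !`, which itself
-- divides the product of the progression up to the factor `q ^ N`.
lemma prod_primes_le_pow_of_eq_add_mul (ha0 : 0 < a) (haq : a ≤ q) {P : Finset ℕ}
    (hP : ∀ p ∈ P, p.Prime ∧ N < p ∧ ∃ i < N, p = a + q * i) : ∏ p ∈ P, p ≤ q ^ (2 * N) := by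
  have hdvd : ∏ p ∈ P, p ∣ ∏ i ∈ Finset.range N, (a + q * i) := by
    refine Finset.prod_primes_dvd _ (fun p hp => (hP p hp).1.prime) fun p hp => ?_
    obtain ⟨-, -, i, hi, rfl⟩ := hP p hp
    exact Finset.dvd_prod_of_mem _ (Finset.mem_range.2 hi)
  have hcop : (∏ p ∈ P, p).Coprime N ! := Nat.Coprime.prod_left fun p hp => by
    obtain ⟨hprime, hNp, -⟩ := hP p hp
    rw [hprime.coprime_iff_not_dvd, hprime.dvd_factorial]
    exact hNp.not_ge
  have hpos : 0 < q ^ N * ∏ i ∈ Finset.range N, (a + q * i) :=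
    mul_pos (pow_pos (ha0.trans_le haq) N) (Finset.prod_pos fun i _ => by positivity)
  refine Nat.le_of_mul_le_mul_right ?_ N.factorial_pos
  calc (∏ p ∈ P, p) * N !
      ≤ q ^ N * ∏ i ∈ Finset.range N, (a + q * i) :=
        Nat.le_of_dvd hpos (hcop.mul_dvd_of_dvd_of_dvd (hdvd.mul_left _)
          (factorial_dvd_pow_mul_prod_add_mul q a N))
    _ ≤ q ^ N * ∏ i ∈ Finset.range N, (q * (i + 1)) := by
        gcongr with i
        linarith
    _ = q ^ (2 * N) * N ! := by
        rw [Finset.prod_mul_distrib, Finset.prod_range_add_one_eq_factorial, Finset.prod_const,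
          Finset.card_range]
        ring

lemma exists_eq_val_add_one_add_mul {a : ZMod q} {p : ℕ} (hp : 0 < p)
    (hpn : p ≤ n) (hpa : (p : ZMod q) = a) :
    ∃ i < n / q + 1, p = (a - 1).val + 1 + q * i := by
  refine ⟨(p - 1) / q, Nat.lt_succ_of_le (Nat.div_le_div_right (by omega)), ?_⟩
  have hval : (a - 1).val = (p - 1) % q := by
    rw [← hpa, ← ZMod.val_natCast, Nat.cast_sub hp, Nat.cast_one]
  have := Nat.mod_add_div (p - 1) q
  omega

lemma thetaMod_le [NeZero q] (a : ZMod q) (n : ℕ) :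
    thetaMod a n ≤ (Real.log 4 + 2 * Real.log q) * (n / q + 1 : ℕ) := by
  set N := n / q + 1
  set P := {p ∈ n.primesLE | ((p : ℕ) : ZMod q) = a}
  have hsmall : ∑ p ∈ P with p ≤ N, Real.log p ≤ Real.log 4 * N := by
    refine le_trans ?_ (Chebyshev.theta_le_log4_mul_x N.cast_nonneg)
    rw [Chebyshev.theta_eq_sum_primesLE_log]
    refine Finset.sum_le_sum_of_subset_of_nonneg (fun p hp => ?_)
      fun p _ _ => Real.log_natCast_nonneg p
    simp only [P, Finset.mem_filter, Nat.mem_primesLE] at hp ⊢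
    exact ⟨hp.2, hp.1.1.2⟩
  have hprod : ∏ p ∈ P with ¬ p ≤ N, p ≤ q ^ (2 * N) := by
    refine prod_primes_le_pow_of_eq_add_mul (Nat.succ_pos _)
      (Nat.succ_le_of_lt (ZMod.val_lt (a - 1))) fun p hp => ?_
    simp only [P, Finset.mem_filter, Nat.mem_primesLE, not_le] at hp
    exact ⟨hp.1.1.2, hp.2, exists_eq_val_add_one_add_mul hp.1.1.2.pos hp.1.1.1 hp.1.2⟩
  have hpos : ∀ p ∈ {p ∈ P | ¬ p ≤ N}, 0 < p := fun p hp => by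
    simp only [P, Finset.mem_filter, Nat.mem_primesLE] at hp
    exact hp.1.1.2.pos
  have hlarge : ∑ p ∈ P with ¬ p ≤ N, Real.log p ≤ 2 * Real.log q * N := by
    rw [← Real.log_prod fun p hp => by exact_mod_cast (hpos p hp).ne', ← Nat.cast_prod]
    calc Real.log ((∏ p ∈ P with ¬ p ≤ N, p : ℕ) : ℝ) ≤ Real.log ((q ^ (2 * N) : ℕ) : ℝ) :=
          Real.log_le_log (by exact_mod_cast Finset.prod_pos hpos) (by exact_mod_cast hprod)
      _ = 2 * Real.log q * N := by
          push_cast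
          rw [Real.log_pow]
          push_cast
          ring
  rw [thetaMod, ← Finset.sum_filter_add_sum_filter_not _ (fun p => p ≤ N), add_mul]
  exact add_le_add hsmall hlarge

lemma natCast_eq_one_iff_mem_divisors_sub_one {p : ℕ} (hp : p.Prime) :
    (p : ZMod q) = 1 ↔ q ∈ (p - 1).divisors := by
  rw [Nat.mem_divisors, and_iff_left (Nat.sub_pos_of_lt hp.one_lt).ne',
    ← Nat.modEq_iff_dvd' hp.one_le, ← ZMod.natCast_eq_natCast_iff, Nat.cast_one, eq_comm]

lemma thetaMod_one (q n : ℕ) :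
    thetaMod (1 : ZMod q) n = ∑ p ∈ n.primesLE with q ∈ (p - 1).divisors, Real.log p := by
  rw [thetaMod, Finset.filter_congr fun p hp =>
    natCast_eq_one_iff_mem_divisors_sub_one (Nat.prime_of_mem_primesLE hp)]

lemma thetaMod_one_zero (n : ℕ) : thetaMod (1 : ZMod 0) n = 0 := by
  simp [thetaMod_one]

lemma thetaMod_one_of_lt (hn : n < q) : thetaMod (1 : ZMod q) n = 0 := by
  rw [thetaMod_one, Finset.filter_false_of_mem, Finset.sum_empty]
  intro p hp hq
  have := Nat.divisor_le hq
  have := Nat.le_of_mem_primesLE hp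
  omega

lemma thetaMod_one_le (q n : ℕ) : thetaMod (1 : ZMod q) n ≤ 4 * ((1 + Real.log q) / q) * n := by
  obtain rfl | hq0 := q.eq_zero_or_pos
  · simp [thetaMod_one_zero]
  have : NeZero q := ⟨hq0.ne'⟩
  have hq : (0 : ℝ) < q := by exact_mod_cast hq0
  have : 0 ≤ Real.log q := Real.log_natCast_nonneg q
  obtain hnq | hqn := lt_or_ge n q
  · rw [thetaMod_one_of_lt hnq]
    positivity
  have hlog_four : Real.log 4 ≤ 2 := by
    rw [show (4 : ℝ) = 2 ^ 2 by norm_num, Real.log_pow, Nat.cast_ofNat]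
    linarith [Real.log_two_lt_d9]
  have hN : ((n / q + 1 : ℕ) : ℝ) ≤ 2 * (n / q) := by
    have hone : (1 : ℝ) ≤ n / q := (one_le_div hq).2 (by exact_mod_cast hqn)
    push_cast
    linarith [Nat.cast_div_le (α := ℝ) (m := n) (n := q)]
  calc thetaMod (1 : ZMod q) n
      ≤ (Real.log 4 + 2 * Real.log q) * (n / q + 1 : ℕ) := thetaMod_le 1 n
    _ ≤ (2 + 2 * Real.log q) * (2 * (n / q)) := by gcongr
    _ = 4 * ((1 + Real.log q) / q) * n := by ring

lemma inv_totient_le (q : ℕ) : (q.totient : ℝ)⁻¹ ≤ 4 * ((1 + Real.log q) / q) := by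
  obtain rfl | hq := q.eq_zero_or_pos
  · simp
  have : NeZero q := ⟨hq.ne'⟩
  refine le_of_tendsto (tendsto_thetaMod_div isUnit_one) ?_
  filter_upwards [eventually_gt_atTop 0] with n hn
  exact (div_le_iff₀ (by exact_mod_cast hn)).2 (thetaMod_one_le q n)

end UniformBound

section MeanOverPrimes

lemma sum_primesLE_log_mul_sum_divisors_sub_one (g : ℕ → ℝ) (n : ℕ) :
    ∑ p ∈ n.primesLE, Real.log p * ∑ d ∈ (p - 1).divisors, g d =
      ∑' d, g d * thetaMod (1 : ZMod d) n := by
  rw [tsum_eq_sum (s := Finset.range (n + 1)) fun d hd => by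
    rw [thetaMod_one_of_lt (by simpa using hd), mul_zero]]
  simp_rw [thetaMod_one, Finset.mul_sum, mul_comm (Real.log _)]
  refine Finset.sum_comm' fun p d => ?_
  simp only [Finset.mem_filter, Finset.mem_range, Nat.lt_succ_iff]
  refine ⟨fun h => ⟨h, ?_⟩, And.left⟩
  exact (Nat.divisor_le h.2).trans ((Nat.sub_le p 1).trans (Nat.le_of_mem_primesLE h.1))

theorem tendsto_sum_primesLE_log_mul_sum_divisors_sub_one_div {g : ℕ → ℝ}
    (hg : Summable fun d : ℕ => |g d| * ((1 + Real.log d) / d)) :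
    Tendsto (fun n : ℕ => (∑ p ∈ n.primesLE, Real.log p * ∑ d ∈ (p - 1).divisors, g d) / n) atTop
      (𝓝 (∑' d : ℕ, g d / d.totient)) := by
  simp_rw [sum_primesLE_log_mul_sum_divisors_sub_one, ← tsum_div_const]
  refine tendsto_tsum_of_dominated_convergence (hg.mul_left 4) (fun d => ?_) ?_
  · simp_rw [mul_div_assoc, div_eq_mul_inv (g d)]
    obtain rfl | hd := d.eq_zero_or_pos
    · simp [thetaMod_one_zero]
    · have : NeZero d := ⟨hd.ne'⟩
      exact (tendsto_thetaMod_div isUnit_one).const_mul _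
  · filter_upwards [eventually_gt_atTop 0] with n hn d
    rw [Real.norm_eq_abs, abs_div, abs_mul, abs_of_nonneg (thetaMod_nonneg _ _), Nat.abs_cast,
      div_le_iff₀ (by exact_mod_cast hn)]
    calc |g d| * thetaMod (1 : ZMod d) n ≤ |g d| * (4 * ((1 + Real.log d) / d) * n) := by
          gcongr
          exact thetaMod_one_le d n
      _ = 4 * (|g d| * ((1 + Real.log d) / d)) * n := by ring

lemma summable_norm_div_totient {g : ℕ → ℝ}
    (hg : Summable fun d : ℕ => |g d| * ((1 + Real.log d) / d)) :
    Summable fun d : ℕ => ‖g d / d.totient‖ := by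
  refine .of_nonneg_of_le (fun _ => norm_nonneg _) (fun d => ?_) (hg.mul_left 4)
  rw [div_eq_mul_inv, norm_mul, norm_inv, Real.norm_natCast, Real.norm_eq_abs, mul_left_comm]
  gcongr
  exact inv_totient_le d

theorem tendsto_theta_div : Tendsto (fun n : ℕ => Chebyshev.theta n / n) atTop (𝓝 1) := by
  have h (n : ℕ) : thetaMod (1 : ZMod 1) n = Chebyshev.theta n := by
    simp [thetaMod, Chebyshev.theta_eq_sum_primesLE_log, Subsingleton.elim _ (1 : ZMod 1)]
  simpa [h] using tendsto_thetaMod_div (q := 1) isUnit_one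

lemma tendsto_primeCounting_mul_log_sub_theta_div :
    Tendsto (fun n : ℕ => (n.primeCounting * Real.log n - Chebyshev.theta n) / n) atTop (𝓝 0) := by
  have hO := (Chebyshev.primeCounting_sub_theta_div_log_isBigO.comp_tendsto
    tendsto_natCast_atTop_atTop).mul
      (Asymptotics.isBigO_refl (fun n : ℕ => Real.log n / n) atTop)
  refine Asymptotics.IsBigO.trans_tendsto (hO.congr' ?_ ?_)
    (Real.tendsto_log_atTop.comp tendsto_natCast_atTop_atTop).inv_tendsto_atTop
  all_goals
    filter_upwards [eventually_gt_atTop 1] with n hn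
    have hlog : Real.log n ≠ 0 := (Real.log_pos (by exact_mod_cast hn)).ne'
    simp only [Function.comp_apply, Nat.floor_natCast, Pi.inv_apply]
    field_simp

theorem tendsto_primeCounting_mul_log_div :
    Tendsto (fun n : ℕ => n.primeCounting * Real.log n / n) atTop (𝓝 1) := by
  simpa [sub_div] using tendsto_primeCounting_mul_log_sub_theta_div.add tendsto_theta_div

theorem tendsto_sum_primesLE_div_primeCounting {f : ℕ → ℝ} {M L : ℝ}
    (hf : ∀ p, p.Prime → |f p| ≤ M)
    (hL : Tendsto (fun n : ℕ => (∑ p ∈ n.primesLE, Real.log p * f p) / n) atTop (𝓝 L)) :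
    Tendsto (fun n : ℕ => (∑ p ∈ n.primesLE, f p) / n.primeCounting) atTop (𝓝 L) := by
  have herror : Tendsto (fun n : ℕ => (∑ p ∈ n.primesLE, (Real.log n - Real.log p) * f p) / n)
      atTop (𝓝 0) := by
    refine squeeze_zero_norm (fun n => ?_)
      (by simpa using tendsto_primeCounting_mul_log_sub_theta_div.const_mul M)
    rw [norm_div, Real.norm_natCast, ← mul_div_assoc, ← Nat.primesLE_card_eq_primeCounting,
      Chebyshev.theta_eq_sum_primesLE_log, ← nsmul_eq_mul, ← Finset.sum_const,
      ← Finset.sum_sub_distrib, Finset.mul_sum]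
    gcongr
    refine norm_sum_le_of_le _ fun p hp => ?_
    have hlog : Real.log p ≤ Real.log n :=
      Real.log_le_log (by exact_mod_cast (Nat.prime_of_mem_primesLE hp).pos)
        (by exact_mod_cast Nat.le_of_mem_primesLE hp)
    rw [norm_mul, Real.norm_of_nonneg (sub_nonneg.2 hlog), mul_comm]
    exact mul_le_mul_of_nonneg_right (hf p (Nat.prime_of_mem_primesLE hp)) (sub_nonneg.2 hlog)
  have hratio := (hL.add herror).div tendsto_primeCounting_mul_log_div one_ne_zero
  rw [add_zero, div_one] at hratio
  refine hratio.congr' ?_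
  filter_upwards [eventually_gt_atTop 1] with n hn
  have hlog : Real.log n ≠ 0 := (Real.log_pos (by exact_mod_cast hn)).ne'
  have hn0 : (n : ℝ) ≠ 0 := by positivity
  rw [Pi.div_apply, ← add_div, ← Finset.sum_add_distrib, div_div_div_cancel_right₀ hn0,
    mul_comm (n.primeCounting : ℝ)]
  simp_rw [← add_mul, add_sub_cancel, ← Finset.mul_sum]
  exact mul_div_mul_left _ _ hlog

lemma primesBelow_nth_prime (N : ℕ) :
    (Nat.nth Nat.Prime N).primesBelow = (Finset.range N).image (Nat.nth Nat.Prime) := by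
  induction N with
  | zero => simp [Nat.nth_prime_zero_eq_two]
  | succ N ih =>
    rw [Nat.primesBelow, Nat.filter_range_nth_eq_insert_of_infinite Nat.infinite_setOfPred_prime,
      ← Nat.primesBelow, ih, Finset.range_add_one, Finset.image_insert]

theorem tendsto_average_nth_prime {f : ℕ → ℝ} {L : ℝ}
    (h : Tendsto (fun n : ℕ => (∑ p ∈ n.primesLE, f p) / n.primeCounting) atTop (𝓝 L)) :
    Tendsto (fun N : ℕ => (1 / (N : ℝ)) * ∑ i ∈ Finset.range N, f (Nat.nth Nat.Prime i)) atTop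
      (𝓝 L) := by
  have hinj := Nat.nth_injective Nat.infinite_setOfPred_prime
  have htop : Tendsto (fun N : ℕ => Nat.nth Nat.Prime N - 1) atTop atTop :=
    (tendsto_sub_atTop_nat 1).comp
      (Nat.nth_strictMono Nat.infinite_setOfPred_prime).tendsto_atTop
  refine (h.comp htop).congr fun N => ?_
  rw [Function.comp_apply, ← Nat.primesLE_card_eq_primeCounting,
    ← Nat.primesBelow_eq_primesLE_sub_one, primesBelow_nth_prime,
    Finset.sum_image hinj.injOn, Finset.card_image_of_injective _ hinj,
    Finset.card_range, one_div_mul_eq_div]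

end MeanOverPrimes

section StephensWeight

lemma sum_divisors_mul_of_coprime {R : Type*} [NonUnitalNonAssocSemiring R] {f : ℕ → R}
    (hf : ∀ {m n : ℕ}, m.Coprime n → f (m * n) = f m * f n) {m n : ℕ} (h : m.Coprime n) :
    ∑ d ∈ (m * n).divisors, f d = (∑ d ∈ m.divisors, f d) * ∑ d ∈ n.divisors, f d := by
  rw [Nat.divisors_mul, Finset.mul_def, Finset.sum_image h.mul_injOn_divisors,
    Finset.sum_product, Finset.sum_mul_sum]
  exact Finset.sum_congr rfl fun d hd => Finset.sum_congr rfl fun e he =>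
    hf (h.of_dvd (Nat.dvd_of_mem_divisors hd) (Nat.dvd_of_mem_divisors he))

lemma stephensSum_mul_of_coprime {m n : ℕ} (h : m.Coprime n) :
    stephensSum (m * n) = stephensSum m * stephensSum n :=
  sum_divisors_mul_of_coprime (f := fun d => d * d.totient)
    (fun h => by rw [Nat.totient_mul h, mul_mul_mul_comm]) h

lemma add_one_mul_stephensSum_prime_pow {p : ℕ} (hp : p.Prime) (k : ℕ) :
    (p + 1) * stephensSum (p ^ k) = 1 + p ^ (2 * k + 1) := by
  rw [stephensSum, Nat.sum_divisors_prime_pow hp]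
  induction k with
  | zero => simp [add_comm]
  | succ k ih =>
    rw [Finset.sum_range_succ, mul_add, ih, Nat.totient_prime_pow_succ hp]
    zify [hp.one_le]
    ring

lemma stephensSum_le_sq (n : ℕ) : stephensSum n ≤ n ^ 2 := by
  calc stephensSum n ≤ ∑ d ∈ n.divisors, n * d.totient :=
        Finset.sum_le_sum fun d hd => Nat.mul_le_mul_right _ (Nat.divisor_le hd)
    _ = n ^ 2 := by rw [← Finset.mul_sum, Nat.sum_totient, sq]

/-- The function `g(d) = d⁻² ∏_{p ∣ d} (1 - p)`, whose sum over the divisors of `n` is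
`𝒮(n) / n²`. -/
noncomputable def stephensWeight (d : ℕ) : ℝ :=
  (∏ p ∈ d.primeFactors, (1 - (p : ℝ))) / (d : ℝ) ^ 2

lemma stephensWeight_one : stephensWeight 1 = 1 := by simp [stephensWeight]

lemma stephensWeight_mul_of_coprime {m n : ℕ} (h : m.Coprime n) :
    stephensWeight (m * n) = stephensWeight m * stephensWeight n := by
  simp_rw [stephensWeight]
  rw [h.primeFactors_mul, Finset.prod_union h.disjoint_primeFactors, Nat.cast_mul, mul_pow,
    mul_div_mul_comm]

lemma stephensWeight_prime_pow_succ {p : ℕ} (hp : p.Prime) (k : ℕ) :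
    stephensWeight (p ^ (k + 1)) = (1 - p) / ((p : ℝ) ^ (k + 1)) ^ 2 := by
  rw [stephensWeight, Nat.primeFactors_prime_pow k.succ_ne_zero hp, Finset.prod_singleton,
    Nat.cast_pow]

lemma abs_stephensWeight_le (d : ℕ) : |stephensWeight d| ≤ (d : ℝ)⁻¹ := by
  obtain rfl | hd := d.eq_zero_or_pos
  · simp [stephensWeight]
  have hprod : |∏ p ∈ d.primeFactors, (1 - (p : ℝ))| ≤ d :=
    calc |∏ p ∈ d.primeFactors, (1 - (p : ℝ))| ≤ ∏ p ∈ d.primeFactors, (p : ℝ) := by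
          rw [Finset.abs_prod]
          refine Finset.prod_le_prod (fun _ _ => abs_nonneg _) fun p hp => ?_
          have : (1 : ℝ) ≤ p := by exact_mod_cast (Nat.prime_of_mem_primeFactors hp).one_le
          exact abs_le.2 ⟨by linarith, by linarith⟩
      _ ≤ d := by
          rw [← Nat.cast_prod]
          exact_mod_cast Nat.le_of_dvd hd (Nat.prod_primeFactors_dvd d)
  calc |stephensWeight d| ≤ d / (d : ℝ) ^ 2 := by
        rw [stephensWeight, abs_div, abs_of_nonneg (sq_nonneg (d : ℝ))]
        gcongr
    _ = (d : ℝ)⁻¹ := by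
        field_simp

lemma sum_divisors_prime_pow_stephensWeight {p : ℕ} (hp : p.Prime) (k : ℕ) :
    ∑ d ∈ (p ^ k).divisors, stephensWeight d = stephensSum (p ^ k) / ((p ^ k : ℕ) : ℝ) ^ 2 := by
  have hp0 : (p : ℝ) ≠ 0 := by exact_mod_cast hp.ne_zero
  have hp1 : (p : ℝ) + 1 ≠ 0 := by positivity
  have hsum : ((p : ℝ) + 1) * stephensSum (p ^ k) = 1 + (p : ℝ) ^ (2 * k + 1) := by
    exact_mod_cast add_one_mul_stephensSum_prime_pow hp k
  rw [← mul_right_inj' hp1, ← mul_div_assoc, hsum, Nat.sum_divisors_prime_pow hp]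
  clear hsum
  induction k with
  | zero => simp [stephensWeight, add_comm]
  | succ k ih =>
    rw [Finset.sum_range_succ, mul_add, ih, stephensWeight_prime_pow_succ hp]
    push_cast
    field_simp
    ring

theorem sum_divisors_stephensWeight (n : ℕ) :
    ∑ d ∈ n.divisors, stephensWeight d = stephensSum n / (n : ℝ) ^ 2 := by
  induction n using Nat.recOnPosPrimePosCoprime with
  | prime_pow p k hp _ => exact sum_divisors_prime_pow_stephensWeight hp k
  | zero => simp
  | one => simp [stephensWeight_one, stephensSum]
  | coprime m n _ _ h hm hn =>
    rw [sum_divisors_mul_of_coprime stephensWeight_mul_of_coprime h, hm, hn,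
      stephensSum_mul_of_coprime h, Nat.cast_mul, Nat.cast_mul, mul_pow, mul_div_mul_comm]

lemma summable_abs_stephensWeight_mul_log :
    Summable fun d : ℕ => |stephensWeight d| * ((1 + Real.log d) / d) := by
  have hsum : Summable fun d : ℕ => 3 * ((d : ℝ) ^ (3 / 2 : ℝ))⁻¹ :=
    (Real.summable_nat_rpow_inv.2 (by norm_num)).mul_left 3
  refine hsum.of_nonneg_of_le (fun d => ?_) fun d => ?_
  · have := Real.log_natCast_nonneg d
    positivity
  obtain rfl | hd := d.eq_zero_or_pos
  · simp
  have hd0 : (0 : ℝ) < d := by exact_mod_cast hd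
  have hlog := Real.log_natCast_le_rpow_div d (ε := 1 / 2) (by norm_num)
  have hone : (1 : ℝ) ≤ (d : ℝ) ^ (1 / 2 : ℝ) :=
    Real.one_le_rpow (by exact_mod_cast hd) (by norm_num)
  have hrpow : (d : ℝ) ^ (3 / 2 : ℝ) * (d : ℝ) ^ (1 / 2 : ℝ) = d * d := by
    rw [← Real.rpow_add hd0]
    norm_num [sq]
  calc |stephensWeight d| * ((1 + Real.log d) / d)
      ≤ (d : ℝ)⁻¹ * (3 * (d : ℝ) ^ (1 / 2 : ℝ) / d) := by
        gcongr
        · exact abs_stephensWeight_le d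
        · linarith
    _ = 3 * ((d : ℝ) ^ (3 / 2 : ℝ))⁻¹ := by
        field_simp
        linarith

lemma tsum_stephensWeight_div_totient_prime_pow {p : ℕ} (hp : p.Prime) :
    ∑' k : ℕ, stephensWeight (p ^ k) / (p ^ k).totient = 1 - (p : ℝ) / ((p : ℝ) ^ 3 - 1) := by
  have hp1 : (1 : ℝ) < p := by exact_mod_cast hp.one_lt
  have hr1 : ((p : ℝ) ^ 3)⁻¹ < 1 := inv_lt_one_of_one_lt₀ (one_lt_pow₀ hp1 three_ne_zero)
  have hgeom := hasSum_geometric_of_lt_one (by positivity) hr1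
  have hterm (k : ℕ) : stephensWeight (p ^ (k + 1)) / (p ^ (k + 1)).totient =
      -(p / (p : ℝ) ^ 3) * (((p : ℝ) ^ 3)⁻¹) ^ k := by
    have hsub : (p : ℝ) - 1 ≠ 0 := (sub_pos.2 hp1).ne'
    rw [stephensWeight_prime_pow_succ hp, Nat.totient_prime_pow_succ hp, inv_pow]
    push_cast [Nat.cast_sub hp.one_le]
    field_simp
    ring
  have hsum : HasSum (fun k : ℕ => stephensWeight (p ^ k) / (p ^ k).totient)
      (-(p / (p : ℝ) ^ 3) * (1 - ((p : ℝ) ^ 3)⁻¹)⁻¹ + 1) := by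
    refine (hasSum_nat_add_iff' 1).1 ?_
    simpa [hterm, stephensWeight_one] using hgeom.mul_left (-(p / (p : ℝ) ^ 3))
  have hcube : (p : ℝ) ^ 3 - 1 ≠ 0 := (sub_pos.2 (one_lt_pow₀ hp1 three_ne_zero)).ne'
  rw [hsum.tsum_eq]
  field_simp
  ring

theorem tsum_stephensWeight_div_totient :
    ∑' d : ℕ, stephensWeight d / d.totient = stephensConstant := by
  rw [stephensConstant, ← EulerProduct.eulerProduct_tprod (by simp [stephensWeight_one])
    (fun h => ?_) (summable_norm_div_totient summable_abs_stephensWeight_mul_log) (by simp)]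
  · exact tprod_congr fun p => tsum_stephensWeight_div_totient_prime_pow p.2
  · rw [stephensWeight_mul_of_coprime h, Nat.totient_mul h, Nat.cast_mul, mul_div_mul_comm]

end StephensWeight

/-- The average `(1/N) ∑_{i=1}^N 𝒮(p_i - 1)/(p_i - 1)²` over the first `N` primes
tends to Stephens' constant. -/
theorem stephens_summation_formula :
    Tendsto (fun N : ℕ =>
        (1 / (N : ℝ)) * ∑ i ∈ Finset.range N,
          (stephensSum (Nat.nth Nat.Prime i - 1) : ℝ) / ((Nat.nth Nat.Prime i : ℝ) - 1) ^ 2)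
      atTop (nhds stephensConstant) := by
  have hshift {p : ℕ} (hp : p.Prime) :
      ∑ d ∈ (p - 1).divisors, stephensWeight d = stephensSum (p - 1) / ((p : ℝ) - 1) ^ 2 := by
    rw [sum_divisors_stephensWeight, Nat.cast_sub hp.one_le, Nat.cast_one]
  have hbound (p : ℕ) : |∑ d ∈ (p - 1).divisors, stephensWeight d| ≤ 1 := by
    rw [sum_divisors_stephensWeight, abs_of_nonneg (by positivity)]
    exact div_le_one_of_le₀ (by exact_mod_cast stephensSum_le_sq (p - 1)) (by positivity)
  have hlog := tendsto_sum_primesLE_log_mul_sum_divisors_sub_one_div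
    summable_abs_stephensWeight_mul_log
  rw [tsum_stephensWeight_div_totient] at hlog
  simpa only [hshift (Nat.prime_nth_prime _)] using
    tendsto_average_nth_prime (tendsto_sum_primesLE_div_primeCounting (fun p _ => hbound p) hlog)
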